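/- Let 0 < σ₁ ≤ σ₀ and set π̲ = σ₁/(σ₀+σ₁) (so π̲ = min(π*, 1−π*) for π* = σ₁/(σ₀+σ₁)). Suppose σ̂₀, σ̂₁ are real numbers with |σ̂₁ − σ₁| ≤ e₁ and |σ̂₀ − σ₀| ≤ e₀ for some errors satisfying 0 ≤ e₀ ≤ e₁ ≤ σ₁/2. Then the plug-in allocation π̃ = σ̂₁/(σ̂₀+σ̂₁) satisfies π̲/2 ≤ π̃ ≤ 1 − π̲/2. -/

import Mathlib

/-!
The allocation `σ1 / (σ0 + σ1)` increases in `σ1` and decreases in `σ0`, so for errors of size at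
most `e` the worst case for a lower bound lowers `σ1` by `e` and raises `σ0` by `e`. This shift
preserves the sum `σ0 + σ1`, hence the estimated allocation is at least `(σ1 - e) / (σ0 + σ1)`.
The upper bound is the same lower bound for the complementary allocation, with the two arms
exchanged.
-/

section NeymanAllocation

variable {𝕜 : Type*} [Field 𝕜] {σ0 σ1 σh0 σh1 e : 𝕜}

/-- The Neyman allocation: the share of units assigned to the second arm when the arms have
standard deviations `σ0` and `σ1`. It is used both for the true deviations (the oracle allocation)
and for estimates of them (the plug-in allocation). -/
def neymanAllocation (σ0 σ1 : 𝕜) : 𝕜 :=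
  σ1 / (σ0 + σ1)

theorem neymanAllocation_swap (h : σ0 + σ1 ≠ 0) :
    neymanAllocation σ1 σ0 = 1 - neymanAllocation σ0 σ1 := by
  rw [neymanAllocation, neymanAllocation, add_comm σ1 σ0, one_sub_div h, add_sub_cancel_right]

variable [LinearOrder 𝕜] [IsStrictOrderedRing 𝕜]

theorem neymanAllocation_le_neymanAllocation (h0 : 0 ≤ σ0) (h1 : 0 ≤ σ1)
    (hσ : 0 < σ0 + σ1) (hσh : 0 < σh0 + σh1) (hle0 : σh0 ≤ σ0) (hle1 : σ1 ≤ σh1) :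
    neymanAllocation σ0 σ1 ≤ neymanAllocation σh0 σh1 := by
  have cross_le : σ1 * σh0 ≤ σh1 * σ0 :=
    calc σ1 * σh0 ≤ σ1 * σ0 := mul_le_mul_of_nonneg_left hle0 h1
      _ ≤ σh1 * σ0 := mul_le_mul_of_nonneg_right hle1 h0
  rw [neymanAllocation, neymanAllocation, div_le_div_iff₀ hσ hσh]
  linarith

theorem sub_div_add_le_neymanAllocation (h0 : 0 ≤ σ0 + e) (h1 : e ≤ σ1)
    (hσ : 0 < σ0 + σ1) (hσh : 0 < σh0 + σh1) (hle0 : σh0 ≤ σ0 + e) (hle1 : σ1 - e ≤ σh1) :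
    (σ1 - e) / (σ0 + σ1) ≤ neymanAllocation σh0 σh1 := by
  have sum_shift : σ0 + e + (σ1 - e) = σ0 + σ1 := by ring
  calc (σ1 - e) / (σ0 + σ1) = neymanAllocation (σ0 + e) (σ1 - e) := by
        rw [neymanAllocation, sum_shift]
    _ ≤ neymanAllocation σh0 σh1 :=
        neymanAllocation_le_neymanAllocation h0 (sub_nonneg.mpr h1) (sum_shift ▸ hσ) hσh hle0 hle1

theorem add_pos_of_abs_sub_le_half_min (hσ : 0 < σ0 + σ1)
    (he0 : |σh0 - σ0| ≤ min σ0 σ1 / 2) (he1 : |σh1 - σ1| ≤ min σ0 σ1 / 2) :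
    0 < σh0 + σh1 := by
  have min_lt_add : min σ0 σ1 < σ0 + σ1 := by
    linarith [min_le_left σ0 σ1, min_le_right σ0 σ1]
  linarith [(abs_le.mp he0).1, (abs_le.mp he1).1]

theorem half_min_div_add_le_neymanAllocation (hσ : 0 < σ0 + σ1)
    (he0 : |σh0 - σ0| ≤ min σ0 σ1 / 2) (he1 : |σh1 - σ1| ≤ min σ0 σ1 / 2) :
    min σ0 σ1 / (σ0 + σ1) / 2 ≤ neymanAllocation σh0 σh1 := by
  have min_nonneg : 0 ≤ min σ0 σ1 := by linarith [abs_nonneg (σh0 - σ0)]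
  have min_le0 : min σ0 σ1 ≤ σ0 := min_le_left σ0 σ1
  have min_le1 : min σ0 σ1 ≤ σ1 := min_le_right σ0 σ1
  calc min σ0 σ1 / (σ0 + σ1) / 2 = min σ0 σ1 / 2 / (σ0 + σ1) := div_right_comm _ _ _
    _ ≤ (σ1 - min σ0 σ1 / 2) / (σ0 + σ1) :=
        div_le_div_of_nonneg_right (by linarith) hσ.le
    _ ≤ neymanAllocation σh0 σh1 :=
        sub_div_add_le_neymanAllocation (by linarith) (by linarith) hσ
          (add_pos_of_abs_sub_le_half_min hσ he0 he1)
          (by linarith [(abs_le.mp he0).2]) (by linarith [(abs_le.mp he1).1])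

theorem stmt10_general (hσ : 0 < σ0 + σ1)
    (he0 : |σh0 - σ0| ≤ min σ0 σ1 / 2) (he1 : |σh1 - σ1| ≤ min σ0 σ1 / 2) :
    min σ0 σ1 / (σ0 + σ1) / 2 ≤ neymanAllocation σh0 σh1 ∧
    neymanAllocation σh0 σh1 ≤ 1 - min σ0 σ1 / (σ0 + σ1) / 2 := by
  have hσh : 0 < σh0 + σh1 := add_pos_of_abs_sub_le_half_min hσ he0 he1
  have lower_swap : min σ0 σ1 / (σ0 + σ1) / 2 ≤ neymanAllocation σh1 σh0 := by
    rw [min_comm] at he0 he1 ⊢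
    rw [add_comm] at hσ ⊢
    exact half_min_div_add_le_neymanAllocation hσ he1 he0
  rw [neymanAllocation_swap hσh.ne'] at lower_swap
  exact ⟨half_min_div_add_le_neymanAllocation hσ he0 he1, le_sub_comm.mp lower_swap⟩

end NeymanAllocation

/-- Deterministic clipping-free bound for the plug-in Neyman allocation: if
0 < σ₁ ≤ σ₀, π̲ = σ₁/(σ₀+σ₁), and |σ̂₁−σ₁| ≤ e₁, |σ̂₀−σ₀| ≤ e₀ with
0 ≤ e₀ ≤ e₁ ≤ σ₁/2, then π̲/2 ≤ σ̂₁/(σ̂₀+σ̂₁) ≤ 1 − π̲/2. -/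
theorem stmt10 (σ0 σ1 σh0 σh1 e0 e1 : ℝ)
    (h1 : 0 < σ1) (h01 : σ1 ≤ σ0)
    (he1 : |σh1 - σ1| ≤ e1) (he0 : |σh0 - σ0| ≤ e0)
    (h0e : 0 ≤ e0) (hee : e0 ≤ e1) (he : e1 ≤ σ1 / 2) :
    σ1 / (σ0 + σ1) / 2 ≤ σh1 / (σh0 + σh1) ∧
    σh1 / (σh0 + σh1) ≤ 1 - σ1 / (σ0 + σ1) / 2 := by
  have hmin : e1 ≤ min σ0 σ1 / 2 := by rwa [min_eq_right h01]
  simpa only [neymanAllocation, min_eq_right h01] using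
    stmt10_general (by linarith) (he0.trans (hee.trans hmin)) (he1.trans hmin)
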